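/- The structural rule of cut is derivable in Gödel's natural deduction system G: for all formulas P, Q and finite lists of formulas Γ, Δ, if the sequents Γ → P and Δ,P → Q are provable in G, then the sequent Δ,Γ → Q is provable in G. -/

import Mathlib

/-- Formulas of Gödel's propositional language: variables, negation ∼, implication ⊃. -/
inductive Fml : Type
  | var : Nat → Fml
  | neg : Fml → Fml
  | imp : Fml → Fml → Fml

open Fml

/-- Provability of sequents Δ → P in Gödel's natural deduction system G.
    `Δ, P` is represented by `Δ ++ [P]` and `P, Δ` by `P :: Δ`. -/
inductive GProof : List Fml → Fml → Prop
  /-- axiom schema P → P -/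
  | ax (P : Fml) : GProof [P] P
  /-- left thinning -/
  | thinL (P : Fml) {Δ : List Fml} {Q : Fml} : GProof Δ Q → GProof (P :: Δ) Q
  /-- right thinning -/
  | thinR (P : Fml) {Δ : List Fml} {Q : Fml} : GProof Δ Q → GProof (Δ ++ [P]) Q
  /-- implication introduction -/
  | impI {Δ : List Fml} {P Q : Fml} : GProof (Δ ++ [P]) Q → GProof Δ (imp P Q)
  /-- additive implication elimination -/
  | impE {Δ : List Fml} {P Q : Fml} : GProof Δ P → GProof Δ (imp P Q) → GProof Δ Q
  /-- strong reductio ad absurdum -/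
  | raa {Δ : List Fml} {P Q : Fml} :
      GProof (Δ ++ [neg P]) Q → GProof (Δ ++ [neg P]) (neg Q) → GProof Δ P

theorem GProof.thinL_list {Δ : List Fml} {Q : Fml} (h : GProof Δ Q) (Γ : List Fml) :
    GProof (Γ ++ Δ) Q := by
  induction Γ with
  | nil => exact h
  | cons A Γ ih => exact GProof.thinL A ih

theorem GProof.thinR_list {Q : Fml} (Γ : List Fml) :
    ∀ {Δ : List Fml}, GProof Δ Q → GProof (Δ ++ Γ) Q := by
  induction Γ with
  | nil => intro Δ h; simpa using h
  | cons A Γ ih => intro Δ h; simpa using ih (GProof.thinR A h)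

/-- The structural rule of cut is derivable in Gödel's system G. -/
theorem cut_derivable (P Q : Fml) (Γ Δ : List Fml)
    (h1 : GProof Γ P) (h2 : GProof (Δ ++ [P]) Q) : GProof (Δ ++ Γ) Q :=
  GProof.impE (GProof.thinL_list h1 Δ) (GProof.thinR_list Γ (GProof.impI h2))
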